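/- arXiv:quant-ph/0309121 — 7 statements merged into one kernel-verified Lean document; each statement's English description precedes it below -/
import Mathlib

section
/- Let G be a finite group and let D : G → U(n) be a unitary matrix representation of G (i.e., a group homomorphism into the group of n×n complex unitary matrices) such that the family of matrices {D(g) : g ∈ G} is linearly independent over ℂ. Suppose A is an n×n unitary matrix which is a linear combination A = Σ_{g ∈ G} α(g)·D(g) with coefficients α(g) ∈ ℂ. Then the associated group circulant circ_G(α), the G×G complex matrix with entry α(g⁻¹h) at position (g,h), is a unitary matrix. -/
/-- The group circulant of `α : G → ℂ`: the `G × G` matrix with entry `α (g⁻¹ * h)`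
at position `(g, h)`. -/
def groupCirculant {G : Type*} [Group G] (α : G → ℂ) : Matrix G G ℂ :=
  Matrix.of fun g h : G => α (g⁻¹ * h)

/-!
Left multiplication by `a = ∑ g, α g • D g` maps the span of the `D g` into itself, and in the
family `g ↦ D g⁻¹` its matrix is exactly `circ_G(α)`. As `star a` is the combination with
coefficients `g ↦ star (α g⁻¹)`, left multiplication by `star a` has matrix `circ_G(α)ᴴ`. Hence
`circ_G(α) * circ_G(α)ᴴ` and `1` are both matrices of left multiplication by `a * star a = 1`, and
linear independence makes this matrix unique.
-/

theorem matrix_eq_of_represents {ι R M : Type*} [Fintype ι] [DecidableEq ι] [CommRing R]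
    [AddCommGroup M] [Module R M] {b : ι → M} (hb : LinearIndependent R b)
    {A B : Matrix ι ι R} {f : Module.End R M} (hA : A.Represents b f) (hB : B.Represents b f) :
    A = B := by
  ext i j
  have hcol : ∑ i, A i j • b i = ∑ i, B i j • b i :=
    (Matrix.represents_iff'.mp hA j).trans (Matrix.represents_iff'.mp hB j).symm
  exact Fintype.linearIndependent_iffₛ.mp hb _ _ hcol i

theorem conjTranspose_groupCirculant {G : Type*} [Group G] (α : G → ℂ) :
    (groupCirculant α).conjTranspose = groupCirculant fun g => star (α g⁻¹) := by
  ext g h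
  simp [groupCirculant]

theorem star_sum_smul_unitary {G k R : Type*} [Group G] [Fintype G] [Semiring R] [StarRing R]
    [Star k] [SMul k R] [StarModule k R] (D : G →* unitary R) (α : G → k) :
    star (∑ g, α g • (D g : R)) = ∑ g, star (α g⁻¹) • (D g : R) := by
  have hstar (g : G) : star (D g : R) = D g⁻¹ := by
    rw [map_inv, ← Unitary.star_eq_inv, Unitary.coe_star]
  simp only [star_sum, star_smul, hstar]
  exact Fintype.sum_equiv (Equiv.inv G) _ _ fun g => by simp

theorem groupCirculant_represents_lmul {G R : Type*} [Group G] [Fintype G] [DecidableEq G]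
    [Ring R] [Algebra ℂ R] (D : G →* R) (α : G → ℂ) :
    (groupCirculant α).Represents (fun g => D g⁻¹) (Algebra.lmul ℂ R (∑ g, α g • D g)) := by
  refine Matrix.represents_iff'.mpr fun h => ?_
  calc ∑ g, α (g⁻¹ * h) • D g⁻¹
      = ∑ k, α k • D (k * h⁻¹) :=
        Fintype.sum_equiv ((Equiv.inv G).trans (Equiv.mulRight h)) _ _ fun g => by simp
    _ = (∑ k, α k • D k) * D h⁻¹ := by
        simp only [map_mul, Finset.sum_mul, smul_mul_assoc]

theorem stmt_0_general {G R : Type*} [Group G] [Fintype G] [DecidableEq G] [Ring R] [StarRing R]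
    [Algebra ℂ R] [StarModule ℂ R] (D : G →* unitary R)
    (hD : LinearIndependent ℂ fun g => (D g : R)) (a : R) (ha : a * star a = 1) (α : G → ℂ)
    (hlin : a = ∑ g, α g • (D g : R)) :
    groupCirculant α ∈ Matrix.unitaryGroup G ℂ := by
  let b : G → R := fun g => D g⁻¹
  have hb : LinearIndependent ℂ b := hD.comp _ inv_injective
  have hcirc (β : G → ℂ) :
      (groupCirculant β).Represents b (Algebra.lmul ℂ R (∑ g, β g • (D g : R))) :=
    groupCirculant_represents_lmul ((unitary R).subtype.comp D) β
  have hα : (groupCirculant α).Represents b (Algebra.lmul ℂ R a) := hlin ▸ hcirc α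
  have hstar : (groupCirculant α).conjTranspose.Represents b (Algebra.lmul ℂ R (star a)) := by
    rw [conjTranspose_groupCirculant, hlin, star_sum_smul_unitary]
    exact hcirc _
  have hmul : (groupCirculant α * (groupCirculant α).conjTranspose).Represents b 1 := by
    simpa only [← map_mul, ha, map_one] using hα.mul hstar
  exact Matrix.mem_unitaryGroup_iff.mpr (matrix_eq_of_represents hb hmul .one)

theorem stmt_0 {n : ℕ} {G : Type*} [Group G] [Fintype G] [DecidableEq G]
    (D : G →* Matrix.unitaryGroup (Fin n) ℂ)
    (hD : LinearIndependent ℂ fun g : G => (D g : Matrix (Fin n) (Fin n) ℂ))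
    (A : Matrix (Fin n) (Fin n) ℂ) (hA : A ∈ Matrix.unitaryGroup (Fin n) ℂ)
    (α : G → ℂ)
    (hlin : A = ∑ g : G, α g • (D g : Matrix (Fin n) (Fin n) ℂ)) :
    groupCirculant α ∈ Matrix.unitaryGroup G ℂ :=
  stmt_0_general D hD A (Matrix.mem_unitaryGroup_iff.mp hA) α hlin
end

section
/- Let G be a finite group and let D : G → U(n) be a unitary matrix representation of G such that the family {D(g) : g ∈ G} is linearly independent over ℂ. Suppose A is an n×n unitary matrix with A = Σ_{g ∈ G} α(g)·D(g) for coefficients α(g) ∈ ℂ. Then for every g ∈ G one has Σ_{h ∈ G} α(g·h)·conj(α(h)) = 1 if g is the identity element of G, and Σ_{h ∈ G} α(g·h)·conj(α(h)) = 0 otherwise. -/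
/-!
A group homomorphism `D` into unitaries extends to a `*`-homomorphism from the group algebra, where
the involution sends `∑ α(g) g` to `∑ conj(α(g)) g⁻¹`. Linear independence of the `D g` says that
this extension is injective, so the relation `A A* = 1` pulls back to `α α* = 1` in the group
algebra; the claim is this equation read off coefficient by coefficient.
-/

open scoped MonoidAlgebra

theorem lift_injective_of_linearIndependent {k R M : Type*} [CommSemiring k] [Semiring R]
    [Algebra k R] [Monoid M] {F : M →* R} (hF : LinearIndependent k F) :
    Function.Injective (MonoidAlgebra.lift k R M F) := by
  intro x y hxy
  simp only [MonoidAlgebra.lift_apply] at hxy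
  exact MonoidAlgebra.coeff_injective (hF hxy)

section GroupAlgebraStar

variable {k G : Type*} [CommSemiring k] [StarRing k] [Group G]

/-- The canonical involution `∑ r • g ↦ ∑ star r • g⁻¹` of the group algebra `k[G]`. It is a plain
function rather than a `Star` instance, since no further star-ring structure is needed. -/
noncomputable def groupAlgebraStar (x : k[G]) : k[G] :=
  .ofCoeff ((x.coeff.mapRange star (star_zero k)).equivMapDomain (Equiv.inv G))

theorem coeff_mul_groupAlgebraStar (x y : k[G]) (g : G) :
    (x * groupAlgebraStar y).coeff g = y.coeff.sum fun h r ↦ x.coeff (g * h) * star r := by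
  rw [MonoidAlgebra.coeff_mul_apply_right, groupAlgebraStar, Finsupp.sum_equivMapDomain,
    Finsupp.sum_mapRange_index fun _ ↦ mul_zero _]
  simp only [Equiv.inv_apply, inv_inv]

theorem lift_groupAlgebraStar {R : Type*} [Semiring R] [StarRing R] [Algebra k R] [StarModule k R]
    (D : G →* unitary R) (x : k[G]) :
    MonoidAlgebra.lift k R G ((unitary R).subtype.comp D) (groupAlgebraStar x) =
      star (MonoidAlgebra.lift k R G ((unitary R).subtype.comp D) x) := by
  rw [MonoidAlgebra.lift_apply, MonoidAlgebra.lift_apply, groupAlgebraStar,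
    Finsupp.sum_equivMapDomain, Finsupp.sum_mapRange_index (by simp), star_finsuppSum]
  simp [star_smul, ← Unitary.star_eq_inv]

end GroupAlgebraStar

theorem stmt_1_general {k R G : Type*} [CommSemiring k] [StarRing k] [Semiring R] [StarRing R]
    [Algebra k R] [StarModule k R] [Group G] [DecidableEq G] (D : G →* unitary R)
    (hD : LinearIndependent k fun g : G => (D g : R)) (A : R) (hA : A * star A = 1)
    (α : G →₀ k) (hlin : A = α.sum fun g r ↦ r • (D g : R)) (g : G) :
    (α.sum fun h r ↦ α (g * h) * star r) = if g = 1 then 1 else 0 := by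
  let φ := MonoidAlgebra.lift k R G ((unitary R).subtype.comp D)
  let a : k[G] := .ofCoeff α
  have hφ : Function.Injective φ := lift_injective_of_linearIndependent hD
  have hφa : φ a = A := (MonoidAlgebra.lift_apply _ _).trans hlin.symm
  have ha : a * groupAlgebraStar a = 1 := hφ <| by
    rw [map_mul, lift_groupAlgebraStar, hφa, hA, map_one]
  calc (α.sum fun h r ↦ α (g * h) * star r)
      = (a * groupAlgebraStar a).coeff g := (coeff_mul_groupAlgebraStar a a g).symm
    _ = if g = 1 then 1 else 0 := by
      simp only [ha, MonoidAlgebra.one_def, MonoidAlgebra.coeff_single, Finsupp.single_apply,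
        eq_comm]

theorem stmt_1 {n : ℕ} {G : Type*} [Group G] [Fintype G] [DecidableEq G]
    (D : G →* Matrix.unitaryGroup (Fin n) ℂ)
    (hD : LinearIndependent ℂ fun g : G => (D g : Matrix (Fin n) (Fin n) ℂ))
    (A : Matrix (Fin n) (Fin n) ℂ) (hA : A ∈ Matrix.unitaryGroup (Fin n) ℂ)
    (α : G → ℂ)
    (hlin : A = ∑ g : G, α g • (D g : Matrix (Fin n) (Fin n) ℂ)) :
    ∀ g : G, (∑ h : G, α (g * h) * (starRingEnd ℂ) (α h)) =
      if g = 1 then 1 else 0 := by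
  simpa [Finsupp.sum_fintype] using stmt_1_general D hD A (Matrix.mem_unitaryGroup_iff.mp hA)
    (Finsupp.equivFunOnFinite.symm α) (by simpa [Finsupp.sum_fintype] using hlin)
end

section
/- Let N be a positive integer, F_N the normalized discrete Fourier transform of size N, A_N the discrete Hartley transform of size N, H = (1/√2)·[[1,1],[1,−1]] the 2×2 Hadamard matrix, and R = (1/2)·[[1−i, 1+i],[1+i, 1−i]]. Let Λ denote the 2N×2N block-diagonal matrix with blocks I_N and F_N² (i.e., Λ = I_N ⊕ F_N², the controlled-F_N² operation). Then the matrix M = (H ⊗ I_N)·Λ·(R ⊗ I_N)·Λ·(I₂ ⊗ F_N)·(H ⊗ I_N) satisfies M·(e₀ ⊗ x) = e₀ ⊗ (A_N·x) for every vector x ∈ ℂ^N, where e₀ = (1,0)ᵀ ∈ ℂ² and ⊗ denotes the Kronecker (tensor) product. -/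
open Kronecker

/-- The normalized discrete Fourier transform of size `N`. -/
noncomputable def dft (N : ℕ) : Matrix (Fin N) (Fin N) ℂ :=
  Matrix.of fun k l : Fin N =>
    ((1 / Real.sqrt N : ℝ) : ℂ) *
      Complex.exp (2 * Real.pi * Complex.I * ((k.1 * l.1 : ℕ) : ℂ) / N)

/-- The discrete Hartley transform of size `N`. -/
noncomputable def hartley (N : ℕ) : Matrix (Fin N) (Fin N) ℂ :=
  Matrix.of fun k l : Fin N =>
    (((1 / Real.sqrt N) * (Real.cos (2 * Real.pi * (k.1 * l.1 : ℕ) / N) +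
        Real.sin (2 * Real.pi * (k.1 * l.1 : ℕ) / N)) : ℝ) : ℂ)

/-- The 2×2 Hadamard matrix `H = (1/√2)·[[1,1],[1,−1]]`. -/
noncomputable def Had : Matrix (Fin 2) (Fin 2) ℂ :=
  (((Real.sqrt 2)⁻¹ : ℝ) : ℂ) • !![1, 1; 1, -1]

/-- The circulant `R = (1/2)·[[1−i, 1+i],[1+i, 1−i]]`. -/
noncomputable def Rmat : Matrix (Fin 2) (Fin 2) ℂ :=
  (1 / 2 : ℂ) • !![1 - Complex.I, 1 + Complex.I; 1 + Complex.I, 1 - Complex.I]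

/-- The block-diagonal matrix `Λ = I_N ⊕ F_N²` (controlled-`F_N²`). -/
noncomputable def Lam (N : ℕ) : Matrix (Fin 2 × Fin N) (Fin 2 × Fin N) ℂ :=
  Matrix.of fun p q =>
    if p.1 = q.1 then
      (if p.1 = 0 then (1 : Matrix (Fin N) (Fin N) ℂ) else dft N ^ 2) p.2 q.2
    else 0


/-!
If `U ^ 2 = 1`, conjugating a one-qubit gate by the controlled `U` leaves its diagonal entries alone
and multiplies its off-diagonal entries by `U`. For a circulant gate with first row `(a, b)`,
conjugating further by the Hadamard matrix diagonalizes the qubit register, and on `e₀` the circuit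
becomes the linear combination `a F + b U F`. Orthogonality of characters shows that `F_N ^ 2` is
the permutation matrix of `k ↦ -k`, so for `U = F_N ^ 2` the product `U F_N` is the entrywise
conjugate of `F_N`, and the entries `(1 ∓ i) / 2` of `R` are exactly the coefficients in
`cos θ + sin θ = (1 - i) / 2 * exp (i θ) + (1 + i) / 2 * exp (-i θ)`.
-/

open Matrix

section Kronecker

variable {R m n : Type*} [CommSemiring R]

/-- The tensor product `u ⊗ v` of two vectors, indexed like the Kronecker product of matrices. -/
def tensorVec (u : m → R) (v : n → R) : m × n → R := fun p => u p.1 * v p.2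

lemma ite_eq_tensorVec (x : n → R) :
    (fun p : Fin 2 × n => if p.1 = 0 then x p.2 else 0) = tensorVec ![1, 0] x := by
  ext ⟨i, k⟩
  fin_cases i <;> simp [tensorVec]

lemma kronecker_mulVec_tensorVec [Fintype m] [Fintype n] {m' n' : Type*}
    (A : Matrix m' m R) (B : Matrix n' n R) (u : m → R) (v : n → R) :
    (A ⊗ₖ B) *ᵥ tensorVec u v = tensorVec (A *ᵥ u) (B *ᵥ v) := by
  ext p
  simp only [mulVec, dotProduct, tensorVec, kroneckerMap_apply, Fintype.sum_prod_type,
    Finset.sum_mul_sum, mul_mul_mul_comm]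

/-- The controlled operation `1 ⊕ U` on two copies of the index type of `U`. -/
def controlled [DecidableEq n] (U : Matrix n n R) : Matrix (Fin 2 × n) (Fin 2 × n) R :=
  single 0 0 1 ⊗ₖ 1 + single 1 1 1 ⊗ₖ U

lemma controlled_mul_kronecker_one_mul_controlled [Fintype n] [DecidableEq n]
    {U : Matrix n n R} (hU : U * U = 1) (a b c d : R) :
    controlled U * (!![a, b; c, d] ⊗ₖ 1) * controlled U =
      !![a, 0; 0, d] ⊗ₖ 1 + !![0, b; c, 0] ⊗ₖ U := by
  have diagonal_eq : !![a, 0; 0, d] = single 0 0 a + single 1 1 d := by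
    ext i j; fin_cases i <;> fin_cases j <;> simp
  have antidiagonal_eq : !![0, b; c, 0] = single 0 1 b + single 1 0 c := by
    ext i j; fin_cases i <;> fin_cases j <;> simp
  simp only [controlled, add_mul, mul_add, ← mul_kronecker_mul, single_mul_mul_single, hU,
    diagonal_eq, antidiagonal_eq, add_kronecker, of_apply, cons_val', cons_val_zero, cons_val_one,
    cons_val_fin_one, one_mul, mul_one]
  abel

end Kronecker

section Interferometer

lemma Had_mul_circulant_mul_Had (a b : ℂ) :
    Had * !![a, b; b, a] * Had = !![a + b, 0; 0, a - b] := by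
  have inv_sqrt_two_sq : (((√2)⁻¹ : ℝ) : ℂ) * (((√2)⁻¹ : ℝ) : ℂ) = 1 / 2 := by
    rw [← Complex.ofReal_mul, ← mul_inv, Real.mul_self_sqrt zero_le_two]
    norm_num
  rw [Had, Matrix.smul_mul, Matrix.smul_mul, Matrix.mul_smul, smul_smul, inv_sqrt_two_sq]
  ext i j
  fin_cases i <;> fin_cases j <;> simp <;> ring

lemma Rmat_eq_circulant :
    Rmat = !![(1 - Complex.I) / 2, (1 + Complex.I) / 2;
      (1 + Complex.I) / 2, (1 - Complex.I) / 2] := by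
  ext i j
  fin_cases i <;> fin_cases j <;> simp [Rmat, div_eq_inv_mul]

variable {n : Type*} [Fintype n] [DecidableEq n]

/-- The circuit of the theorem, for any controlled matrix `U`, any matrix `F` and a circulant middle
gate with first row `(a, b)`. -/
noncomputable def interferometer (U F : Matrix n n ℂ) (a b : ℂ) :
    Matrix (Fin 2 × n) (Fin 2 × n) ℂ :=
  (Had ⊗ₖ 1) * controlled U * (!![a, b; b, a] ⊗ₖ 1) * controlled U * (1 ⊗ₖ F) * (Had ⊗ₖ 1)

lemma interferometer_eq {U : Matrix n n ℂ} (hU : U * U = 1) (F : Matrix n n ℂ) (a b : ℂ) :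
    interferometer U F a b =
      !![a, 0; 0, a] ⊗ₖ F + !![b, 0; 0, -b] ⊗ₖ (U * F) := by
  calc
    _ = (Had ⊗ₖ 1) * (controlled U * (!![a, b; b, a] ⊗ₖ 1) * controlled U) *
          ((1 ⊗ₖ F) * (Had ⊗ₖ 1)) := by simp only [interferometer, Matrix.mul_assoc]
    _ = (Had * !![a, 0; 0, a] * Had) ⊗ₖ F + (Had * !![0, b; b, 0] * Had) ⊗ₖ (U * F) := by
      simp only [controlled_mul_kronecker_one_mul_controlled hU, Matrix.mul_add, Matrix.add_mul,
        ← mul_kronecker_mul, Matrix.one_mul, Matrix.mul_one]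
    _ = _ := by simp only [Had_mul_circulant_mul_Had, add_zero, zero_add, sub_zero, zero_sub]

lemma interferometer_mulVec_tensorVec {U : Matrix n n ℂ} (hU : U * U = 1) (F : Matrix n n ℂ)
    (a b : ℂ) (x : n → ℂ) :
    interferometer U F a b *ᵥ tensorVec ![1, 0] x =
      tensorVec ![1, 0] ((a • F + b • (U * F)) *ᵥ x) := by
  rw [interferometer_eq hU, add_mulVec, kronecker_mulVec_tensorVec, kronecker_mulVec_tensorVec]
  ext ⟨i, k⟩
  fin_cases i <;> simp [tensorVec, add_mulVec, smul_mulVec]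

end Interferometer

section Fourier

variable {N : ℕ}

lemma Lam_eq_controlled (N : ℕ) : Lam N = controlled (dft N ^ 2) := by
  ext ⟨i, k⟩ ⟨j, l⟩
  fin_cases i <;> fin_cases j <;> simp [Lam, controlled]

lemma dft_apply_eq_exp (k l : Fin N) :
    dft N k l = ((1 / √N : ℝ) : ℂ) *
      Complex.exp ((2 * Real.pi * (k.1 * l.1 : ℕ) / N : ℝ) * Complex.I) := by
  simp only [dft, of_apply]
  congr 2
  push_cast
  ring

lemma dft_apply_eq_stdAddChar [NeZero N] (k l : Fin N) :
    dft N k l =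
      ((1 / √N : ℝ) : ℂ) * ZMod.stdAddChar (ZMod.finEquiv N k * ZMod.finEquiv N l) := by
  have finEquiv_eq_natCast (j : Fin N) : ZMod.finEquiv N j = ((j.1 : ℤ) : ZMod N) := by
    cases N with
    | zero => exact j.elim0
    | succ N =>
      rw [Int.cast_natCast]
      exact (Fin.cast_val_eq_self j).symm
  rw [finEquiv_eq_natCast, finEquiv_eq_natCast, ← Int.cast_mul, ZMod.stdAddChar_coe]
  simp [dft]

lemma dft_neg_apply [NeZero N] (k l : Fin N) : dft N (-k) l = star (dft N k l) := by
  simp only [dft_apply_eq_stdAddChar, map_neg, neg_mul, AddChar.map_neg_eq_conj, star_mul',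
    Complex.star_def, Complex.conj_ofReal]

lemma sum_stdAddChar_finEquiv_mul [NeZero N] (b : ZMod N) :
    ∑ j : Fin N, ZMod.stdAddChar (ZMod.finEquiv N j * b) = if b = 0 then (N : ℂ) else 0 := by
  calc
    _ = ∑ j : ZMod N, ZMod.stdAddChar (j * b) :=
      (ZMod.finEquiv N).toEquiv.sum_comp fun j => ZMod.stdAddChar (j * b)
    _ = _ := by rw [AddChar.sum_mulShift b (ZMod.isPrimitive_stdAddChar N), ZMod.card]; norm_cast

lemma dft_sq (N : ℕ) [NeZero N] : dft N ^ 2 = (Equiv.neg (Fin N)).permMatrix ℂ := by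
  ext k l
  have normalization : ((1 / √N : ℝ) : ℂ) * ((1 / √N : ℝ) : ℂ) * N = 1 := by
    rw [← Complex.ofReal_mul, div_mul_div_comm, Real.mul_self_sqrt N.cast_nonneg]
    simp [NeZero.ne N]
  calc
    (dft N ^ 2) k l = ((1 / √N : ℝ) : ℂ) * ((1 / √N : ℝ) : ℂ) *
        ∑ j : Fin N, ZMod.stdAddChar (ZMod.finEquiv N j * ZMod.finEquiv N (k + l)) := by
      rw [pow_two, mul_apply, Finset.mul_sum]
      refine Finset.sum_congr rfl fun j _ => ?_
      rw [dft_apply_eq_stdAddChar, dft_apply_eq_stdAddChar, mul_mul_mul_comm,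
        ← AddChar.map_add_eq_mul, mul_comm (ZMod.finEquiv N k), ← mul_add, map_add]
    _ = if k + l = 0 then 1 else 0 := by
      simp only [sum_stdAddChar_finEquiv_mul, map_eq_zero_iff _ (ZMod.finEquiv N).injective,
        mul_ite, normalization, mul_zero]
    _ = (Equiv.neg (Fin N)).permMatrix ℂ k l := by
      simp [PEquiv.toMatrix_apply, Equiv.toPEquiv_apply, neg_eq_iff_add_eq_zero]

lemma dft_sq_mul_dft_sq (N : ℕ) [NeZero N] : dft N ^ 2 * dft N ^ 2 = 1 := by
  rw [dft_sq, ← permMatrix_mul, ← permMatrix_one]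
  congr 1
  ext k
  simp

lemma dft_sq_mul_dft (N : ℕ) [NeZero N] : dft N ^ 2 * dft N = (dft N).map star := by
  rw [dft_sq, PEquiv.toMatrix_toPEquiv_mul]
  ext k l
  exact dft_neg_apply k l

lemma cos_add_sin_eq_exp (θ : ℝ) :
    ((Real.cos θ + Real.sin θ : ℝ) : ℂ) =
      (1 - Complex.I) / 2 * Complex.exp (θ * Complex.I) +
        (1 + Complex.I) / 2 * star (Complex.exp (θ * Complex.I)) := by
  simp only [Complex.exp_mul_I, Complex.star_def, map_add, map_mul, Complex.conj_I,
    ← Complex.ofReal_cos, ← Complex.ofReal_sin, Complex.conj_ofReal, Complex.ofReal_add]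
  linear_combination (Real.sin θ : ℂ) * Complex.I_sq

lemma hartley_eq_dft_add_dft_map_star (N : ℕ) :
    hartley N =
      ((1 - Complex.I) / 2) • dft N + ((1 + Complex.I) / 2) • (dft N).map star := by
  ext k l
  simp only [hartley, of_apply, Matrix.add_apply, Matrix.smul_apply, map_apply, smul_eq_mul,
    dft_apply_eq_exp, Complex.star_def, map_mul, Complex.conj_ofReal]
  rw [Complex.ofReal_mul, cos_add_sin_eq_exp, Complex.star_def]
  ring

end Fourier

theorem stmt_3 (N : ℕ) (hN : 0 < N) (x : Fin N → ℂ) :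
    ((Had ⊗ₖ (1 : Matrix (Fin N) (Fin N) ℂ)) * Lam N *
        (Rmat ⊗ₖ (1 : Matrix (Fin N) (Fin N) ℂ)) * Lam N *
        ((1 : Matrix (Fin 2) (Fin 2) ℂ) ⊗ₖ dft N) *
        (Had ⊗ₖ (1 : Matrix (Fin N) (Fin N) ℂ))).mulVec
      (fun p : Fin 2 × Fin N => if p.1 = 0 then x p.2 else 0) =
    fun p : Fin 2 × Fin N => if p.1 = 0 then (hartley N).mulVec x p.2 else 0 := by
  have : NeZero N := ⟨hN.ne'⟩
  rw [ite_eq_tensorVec, ite_eq_tensorVec, Lam_eq_controlled, Rmat_eq_circulant,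
    hartley_eq_dft_add_dft_map_star, ← dft_sq_mul_dft]
  exact interferometer_mulVec_tensorVec (dft_sq_mul_dft_sq N) (dft N) _ _ x
end

section
/- Let G be a finite group, D : G → U(m) a unitary matrix representation of G, α : G → ℂ, and set A = Σ_{g ∈ G} α(g)·D(g). Let 𝒟 denote the (G-indexed) block-diagonal matrix diag(D(g) : g ∈ G) acting on ℂ^G ⊗ ℂ^m, let C = circ_G(α) ⊗ I_m, and let u = (1/√|G|)·Σ_{g ∈ G} e_g ∈ ℂ^G be the normalized uniform superposition vector. Then 𝒟†·C·𝒟·(u ⊗ x) = u ⊗ (A·x) for every x ∈ ℂ^m. -/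
open Matrix Kronecker

/-- The `G`-indexed block-diagonal matrix `diag(D(g) : g ∈ G)` acting on `ℂ^G ⊗ ℂ^m`. -/
def blockDiag {G : Type*} [Group G] [Fintype G] [DecidableEq G] {m : ℕ}
    (D : G →* Matrix.unitaryGroup (Fin m) ℂ) : Matrix (G × Fin m) (G × Fin m) ℂ :=
  Matrix.of fun p q =>
    if p.1 = q.1 then (D p.1 : Matrix (Fin m) (Fin m) ℂ) p.2 q.2 else 0

/-!
Read a `(G × n) × (G × n)` matrix as a `G × G` matrix with entries in the matrix ring over `n`.
Then `𝒟† C 𝒟` has `(g, h)` entry `D(g)⁻¹ α(g⁻¹h) D(h) = α(g⁻¹h) D(g⁻¹h)`, so it is again a group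
circulant, and each of its block rows sums to `A = ∑ α(g) D(g)`. On a vector that is constant along
`G`, such as `u ⊗ x`, a block matrix acts through its block row sums.
-/

section Circulant

variable {G S : Type*} [Group G]

/-- The group circulant of a function on `G` with values in an arbitrary type. Matrix values give a
block circulant, which `Matrix.comp` flattens. The entry at `(g, h)` depends on `g⁻¹ * h`, so it is
invariant under left translation. -/
def leftCirculant (f : G → S) : Matrix G G S :=
  of fun g h => f (g⁻¹ * h)

theorem leftCirculant_apply (f : G → S) (g h : G) : leftCirculant f g h = f (g⁻¹ * h) :=
  rfl

theorem groupCirculant_eq_leftCirculant (α : G → ℂ) : groupCirculant α = leftCirculant α :=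
  rfl

theorem leftCirculant_map {T : Type*} (f : G → S) (φ : S → T) :
    (leftCirculant f).map φ = leftCirculant (φ ∘ f) :=
  rfl

theorem sum_leftCirculant_row [Fintype G] [AddCommMonoid S] (f : G → S) (g : G) :
    ∑ h, leftCirculant f g h = ∑ h, f h :=
  Equiv.sum_comp (Equiv.mulLeft g⁻¹) f

theorem diagonal_inv_mul_leftCirculant_mul_diagonal [Fintype G] [DecidableEq G] [Semiring S]
    (D : G →* S) (f : G → S) (hcomm : ∀ g k, Commute (D g) (f k)) :
    diagonal (fun g => D g⁻¹) * leftCirculant f * diagonal D =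
      leftCirculant fun g => f g * D g := by
  ext g h
  simp only [mul_diagonal, diagonal_mul, leftCirculant_apply]
  calc D g⁻¹ * f (g⁻¹ * h) * D h = f (g⁻¹ * h) * (D g⁻¹ * D h) := by
        rw [(hcomm _ _).eq, mul_assoc]
    _ = f (g⁻¹ * h) * D (g⁻¹ * h) := by rw [map_mul]

end Circulant

section Blocks

variable {I J K L R : Type*}

theorem comp_mulVec_snd [Fintype J] [Fintype L] [NonUnitalNonAssocSemiring R]
    (M : Matrix I J (Matrix K L R)) (v : L → R) :
    comp I J K L R M *ᵥ (fun p => v p.2) = fun p => ((∑ j, M p.1 j) *ᵥ v) p.2 := by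
  ext ⟨i, k⟩
  simp only [sum_mulVec, Finset.sum_apply]
  exact Fintype.sum_prod_type _

theorem kronecker_one_eq_comp_map_scalar [Fintype K] [DecidableEq K] [Semiring R]
    (M : Matrix I J R) :
    M ⊗ₖ (1 : Matrix K K R) = comp I J K K R (M.map (scalar K)) := by
  ext ⟨i, k⟩ ⟨j, l⟩
  simp [one_apply, diagonal_apply]

theorem conjTranspose_comp_diagonal [DecidableEq I] [AddMonoid R] [StarAddMonoid R]
    (d : I → Matrix K K R) :
    (comp I I K K R (diagonal d))ᴴ = comp I I K K R (diagonal fun i => (d i)ᴴ) :=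
  congrArg (comp I I K K R) (diagonal_conjTranspose d)

end Blocks

section Representation

variable {G n R : Type*} [Group G] [Fintype G] [DecidableEq G] [Fintype n] [DecidableEq n]
  [CommSemiring R]

theorem comp_diagonal_inv_mul_leftCirculant_kronecker_one_mul_comp_diagonal
    (D : G →* Matrix n n R) (α : G → R) :
    comp G G n n R (diagonal fun g => D g⁻¹) * (leftCirculant α ⊗ₖ (1 : Matrix n n R)) *
        comp G G n n R (diagonal D) =
      comp G G n n R (leftCirculant fun g => α g • D g) := by
  have hcomm (g k : G) : Commute (D g) (scalar n (α k)) :=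
    (scalar_commute _ (Commute.all _) _).symm
  rw [kronecker_one_eq_comp_map_scalar, leftCirculant_map]
  simp only [← compRingEquiv_apply, ← map_mul]
  rw [diagonal_inv_mul_leftCirculant_mul_diagonal D (scalar n ∘ α) hcomm]
  simp only [Function.comp_apply, scalar_apply, smul_eq_diagonal_mul]

theorem stmt_5_general (D : G →* Matrix n n R) (α : G → R) (c : R) (x : n → R) :
    (comp G G n n R (diagonal fun g => D g⁻¹) * (leftCirculant α ⊗ₖ (1 : Matrix n n R)) *
        comp G G n n R (diagonal D)) *ᵥ (fun p => c * x p.2) =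
      fun p => c * ((∑ g, α g • D g) *ᵥ x) p.2 := by
  rw [comp_diagonal_inv_mul_leftCirculant_kronecker_one_mul_comp_diagonal]
  refine (comp_mulVec_snd _ (c • x)).trans ?_
  simp only [sum_leftCirculant_row, mulVec_smul, Pi.smul_apply, smul_eq_mul]

end Representation

section Unitary

variable {G : Type*} [Group G] [Fintype G] [DecidableEq G] {m : ℕ}
  (D : G →* unitaryGroup (Fin m) ℂ)

theorem blockDiag_eq_comp_diagonal :
    _root_.blockDiag D = comp G G _ _ ℂ (diagonal fun g => (D g : Matrix (Fin m) (Fin m) ℂ)) := by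
  ext ⟨g, i⟩ ⟨h, j⟩
  by_cases hgh : g = h <;> simp [_root_.blockDiag, hgh]

theorem conjTranspose_blockDiag :
    (_root_.blockDiag D)ᴴ =
      comp G G _ _ ℂ (diagonal fun g => (D g⁻¹ : Matrix (Fin m) (Fin m) ℂ)) := by
  have hinv (g : G) : (D g⁻¹ : Matrix (Fin m) (Fin m) ℂ) = (D g : Matrix (Fin m) (Fin m) ℂ)ᴴ :=
    congrArg Subtype.val (map_inv D g)
  simp only [blockDiag_eq_comp_diagonal, conjTranspose_comp_diagonal, hinv]

end Unitary

theorem stmt_5 {m : ℕ} {G : Type*} [Group G] [Fintype G] [DecidableEq G]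
    (D : G →* Matrix.unitaryGroup (Fin m) ℂ) (α : G → ℂ)
    (A : Matrix (Fin m) (Fin m) ℂ)
    (hA : A = ∑ g : G, α g • (D g : Matrix (Fin m) (Fin m) ℂ))
    (x : Fin m → ℂ) :
    ((blockDiag D)ᴴ * (groupCirculant α ⊗ₖ (1 : Matrix (Fin m) (Fin m) ℂ)) *
        blockDiag D).mulVec
      (fun p : G × Fin m => (((Real.sqrt (Fintype.card G))⁻¹ : ℝ) : ℂ) * x p.2) =
    fun p : G × Fin m =>
      (((Real.sqrt (Fintype.card G))⁻¹ : ℝ) : ℂ) * A.mulVec x p.2 := by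
  rw [hA, conjTranspose_blockDiag, blockDiag_eq_comp_diagonal, groupCirculant_eq_leftCirculant]
  exact stmt_5_general ((unitaryGroup (Fin m) ℂ).subtype.comp D) α _ x
end

section
/- Let G be a finite group and D : G → U(n) a unitary matrix representation of G (the matrices D(g) are not assumed linearly independent). If a unitary n×n matrix A lies in the ℂ-linear span of {D(g) : g ∈ G}, then there exists a choice of coefficients α : G → ℂ such that A = Σ_{g ∈ G} α(g)·D(g) and the associated group circulant circ_G(α) is unitary. -/
/-!
The representation extends to a *-homomorphism `φ` on the group algebra, which is semisimple by
Maschke's theorem. So the kernel of `φ`, a left ideal closed under `star`, is generated by a central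
projection `p`, and if `φ a` is unitary then `(1 - p) * a + p` is a unitary element with the same
image. The map from an element of the group algebra to the group circulant of its coefficients
is itself a *-homomorphism, so it sends this element to a unitary matrix.
-/

section SemisimpleStarRing

variable {S : Type*} [Ring S] [StarRing S] [IsSemisimpleRing S]

lemma exists_isStarProjection_forall_mem_iff_mul_eq {I : Ideal S} (hI : ∀ x ∈ I, star x ∈ I) :
    ∃ p ∈ Subring.center S, IsStarProjection p ∧ ∀ x, x ∈ I ↔ p * x = x := by
  obtain ⟨p, hp, rfl⟩ := IsSemisimpleRing.ideal_eq_span_idempotent I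
  have p_mem : p ∈ Ideal.span {p} := Ideal.mem_span_singleton_self p
  have mul_p {x : S} (hx : x ∈ Ideal.span {p}) : x * p = x := by
    obtain ⟨y, rfl⟩ := Ideal.mem_span_singleton'.mp hx
    rw [mul_assoc, hp.eq]
  have star_p : star p = p := by
    have h : star p * p = star p := mul_p (hI p p_mem)
    calc star p = star (star p * p) := by rw [star_mul, star_star, h]
      _ = p := by rw [h, star_star]
  have p_mul {x : S} (hx : x ∈ Ideal.span {p}) : p * x = x := by
    simpa [star_p] using congrArg star (mul_p (hI x hx))
  have p_mul_mem (x : S) : p * x ∈ Ideal.span {p} := by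
    simpa [star_p] using hI _ (Ideal.mul_mem_left _ (star x) p_mem)
  refine ⟨p, Subring.mem_center_iff.mpr fun x => ?_, ⟨hp, star_p⟩,
    fun x => ⟨p_mul, fun hx => hx ▸ p_mul_mem x⟩⟩
  calc x * p = p * (x * p) := (p_mul (Ideal.mul_mem_left _ x p_mem)).symm
    _ = p * x * p := (mul_assoc p x p).symm
    _ = p * x := mul_p (p_mul_mem x)

theorem exists_mem_unitary_map_eq {R F : Type*} [Ring R] [StarRing R] [FunLike F S R]
    [RingHomClass F S R] [StarHomClass F S R] (φ : F) {a : S} (ha : φ a ∈ unitary R) :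
    ∃ v ∈ unitary S, φ v = φ a := by
  have star_mem_ker : ∀ x ∈ RingHom.ker φ, star x ∈ RingHom.ker φ := fun x hx => by
    rw [RingHom.mem_ker] at hx ⊢
    rw [map_star, hx, star_zero]
  obtain ⟨p, hpc, hp, mem_ker_iff⟩ := exists_isStarProjection_forall_mem_iff_mul_eq star_mem_ker
  have φ_p : φ p = 0 := (mem_ker_iff p).mpr hp.isIdempotentElem.eq
  set v : S := (1 - p) * a + p with hv
  have φ_v : φ v = φ a := by simp [hv, φ_p]
  have p_mul_v : p * v = p := by
    rw [hv, mul_add, ← mul_assoc, hp.isIdempotentElem.mul_one_sub_self, zero_mul, zero_add,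
      hp.isIdempotentElem.eq]
  have p_mul_star_v : p * star v = p := by
    simpa [← Subring.mem_center_iff.mp hpc, hp.isSelfAdjoint.star_eq] using congrArg star p_mul_v
  have eq_one {x : S} (φ_x : φ x = 1) (p_mul_x : p * x = p) : x = 1 := by
    have sub_mem : x - 1 ∈ RingHom.ker φ := by
      rw [RingHom.mem_ker, map_sub, map_one, φ_x, sub_self]
    rw [← sub_eq_zero, ← (mem_ker_iff _).mp sub_mem, mul_sub, p_mul_x, mul_one, sub_self]
  refine ⟨v, Unitary.mem_iff.mpr ⟨eq_one ?_ ?_, eq_one ?_ ?_⟩, φ_v⟩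
  · rw [map_mul, map_star, φ_v, Unitary.star_mul_self_of_mem ha]
  · rw [← mul_assoc, p_mul_star_v, p_mul_v]
  · rw [map_mul, map_star, φ_v, Unitary.mul_star_self_of_mem ha]
  · rw [← mul_assoc, p_mul_v, p_mul_star_v]

end SemisimpleStarRing

section GroupAlgebra

open scoped MonoidAlgebra

variable {k G : Type*} [Group G]

section Semiring

variable [Semiring k] [StarRing k]

/-- The involution of the group algebra: conjugate-linear, and inverting group elements. -/
noncomputable instance : Star k[G] where
  star x := .ofCoeff ((x.coeff.mapRange star (star_zero k)).equivMapDomain (Equiv.inv G))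

@[simp]
lemma coeff_star_apply (x : k[G]) (g : G) : (star x).coeff g = star (x.coeff g⁻¹) := rfl

noncomputable instance : StarAddMonoid k[G] where
  star_involutive x := by ext; simp
  star_add x y := by ext; simp

@[simp]
lemma star_single (g : G) (c : k) :
    star (MonoidAlgebra.single g c) = MonoidAlgebra.single g⁻¹ (star c) := by
  classical
  ext h
  simp [Finsupp.single_apply, apply_ite star, inv_eq_iff_eq_inv]

noncomputable instance : StarRing k[G] where
  star_add := star_add
  star_mul x y := by
    induction x using MonoidAlgebra.induction_linear with
    | zero => simp
    | add x₁ x₂ h₁ h₂ => simp [add_mul, mul_add, h₁, h₂]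
    | single g c =>
      induction y using MonoidAlgebra.induction_linear with
      | zero => simp
      | add y₁ y₂ h₁ h₂ => simp [add_mul, mul_add, h₁, h₂]
      | single h d => simp

end Semiring

/-- The extension of a unitary representation to a *-homomorphism on the group algebra. -/
noncomputable def unitaryLift {R : Type*} [CommSemiring k] [StarRing k] [Semiring R] [StarRing R]
    [Algebra k R] [StarModule k R] (D : G →* unitary R) : k[G] →⋆ₐ[k] R where
  __ := MonoidAlgebra.lift k R G ((unitary R).subtype.comp D)
  map_star' x := by
    induction x using MonoidAlgebra.induction_linear with
    | zero => simp
    | add x y hx hy => simp_all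
    | single g c => simp [← Unitary.star_eq_inv]

lemma unitaryLift_apply {R : Type*} [CommSemiring k] [StarRing k] [Semiring R] [StarRing R]
    [Algebra k R] [StarModule k R] (D : G →* unitary R) (x : k[G]) :
    unitaryLift D x = x.coeff.sum fun g c => c • (D g : R) :=
  MonoidAlgebra.lift_apply _ x

/-- The right regular representation of the group algebra, in the basis of group elements. -/
def groupCirculantHom [Fintype G] [DecidableEq G] : ℂ[G] →⋆* Matrix G G ℂ where
  toFun x := groupCirculant x.coeff
  map_one' := by
    ext g h
    simp [groupCirculant, MonoidAlgebra.one_def, Finsupp.single_apply, Matrix.one_apply,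
      inv_mul_eq_one, eq_comm]
  map_mul' x y := by
    ext g h
    simp only [groupCirculant, Matrix.of_apply, Matrix.mul_apply,
      MonoidAlgebra.coeff_mul_apply_left]
    rw [Finsupp.sum_fintype _ _ (by simp), ← Equiv.sum_comp (Equiv.mulLeft g⁻¹)]
    simp [mul_assoc]
  map_star' x := by
    ext g h
    simp [groupCirculant]

end GroupAlgebra

theorem stmt_8_general {R G : Type*} [Ring R] [StarRing R] [Algebra ℂ R] [StarModule ℂ R]
    [Group G] [Fintype G] [DecidableEq G] (D : G →* unitary R)
    (A : R) (hA : A ∈ unitary R)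
    (hspan : A ∈ Submodule.span ℂ (Set.range fun g : G => (D g : R))) :
    ∃ α : G → ℂ, A = ∑ g : G, α g • (D g : R) ∧
      groupCirculant α ∈ Matrix.unitaryGroup G ℂ := by
  obtain ⟨a, rfl⟩ := Finsupp.mem_span_range_iff_exists_finsupp.mp hspan
  have lift_a := unitaryLift_apply (k := ℂ) D (.ofCoeff a)
  obtain ⟨v, hv, lift_v⟩ := exists_mem_unitary_map_eq (unitaryLift (k := ℂ) D) (lift_a ▸ hA)
  refine ⟨v.coeff, ?_, Unitary.map_mem groupCirculantHom hv⟩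
  rw [← lift_a, ← lift_v, unitaryLift_apply, Finsupp.sum_fintype _ _ (by simp)]

theorem stmt_8 {n : ℕ} {G : Type*} [Group G] [Fintype G] [DecidableEq G]
    (D : G →* Matrix.unitaryGroup (Fin n) ℂ)
    (A : Matrix (Fin n) (Fin n) ℂ) (hA : A ∈ Matrix.unitaryGroup (Fin n) ℂ)
    (hspan : A ∈ Submodule.span ℂ
      (Set.range fun g : G => (D g : Matrix (Fin n) (Fin n) ℂ))) :
    ∃ α : G → ℂ,
      A = ∑ g : G, α g • (D g : Matrix (Fin n) (Fin n) ℂ) ∧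
      groupCirculant α ∈ Matrix.unitaryGroup G ℂ :=
  stmt_8_general D A hA hspan
end

section
/- Let G be a finite group with identity 1 and let D : G → U(n) be a projective unitary representation with factor set ω : G × G → ℂ, i.e., D(1) = I_n and D(g)·D(h) = ω(g,h)·D(gh) for all g,h ∈ G, with every D(g) unitary. Suppose the family {D(g) : g ∈ G} is linearly independent over ℂ, and suppose A is an n×n unitary matrix with A = Σ_{g ∈ G} α(g)·D(g) for coefficients α(g) ∈ ℂ. Then the projective group circulant circ_{G,ω}(α), the G×G matrix with entry ω(g⁻¹,h)⁻¹·α(g⁻¹h) at position (g,h), is a unitary matrix. -/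
/-- The projective group circulant for `(G, ω)` with respect to `α`: the `G × G`
matrix with entry `ω(g⁻¹,h)⁻¹ · α(g⁻¹h)` at position `(g, h)`. -/
noncomputable def projCirculant {G : Type*} [Group G] (ω : G → G → ℂ) (α : G → ℂ) : Matrix G G ℂ :=
  Matrix.of fun g h : G => (ω g⁻¹ h)⁻¹ * α (g⁻¹ * h)

/-!
Extend "coefficient of the identity" from the span of the `D g` to a functional `τ` with `τ 1 = 1`
and `τ (D g) = 0` for `g ≠ 1`. For the sesquilinear form `(x, y) ↦ τ (x * star y)`, both `(D g)` and
`(star (D g⁻¹))` are orthonormal. Right multiplication by a unitary `a` preserves the form, and the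
circulant of `a = ∑ g, α g • D g` is the matrix taking `(D g)` to `(star (D g⁻¹) * a)`. So it takes
one orthonormal family to another, hence is unitary.
-/

theorem exists_linearMap_apply_eq_of_linearIndependent {ι K V W : Type*} [DivisionRing K]
    [AddCommGroup V] [Module K V] [AddCommGroup W] [Module K W] {v : ι → V}
    (hv : LinearIndependent K v) (w : ι → W) : ∃ f : V →ₗ[K] W, ∀ i, f (v i) = w i := by
  obtain ⟨coeff, hcoeff⟩ := (Finsupp.linearCombination K v).exists_leftInverse_of_injective
    (LinearMap.ker_eq_bot.mpr hv)
  refine ⟨Finsupp.linearCombination K w ∘ₗ coeff, fun i ↦ ?_⟩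
  have hcoeff_v : coeff (v i) = Finsupp.single i 1 := by
    simpa using LinearMap.congr_fun hcoeff (Finsupp.single i 1)
  simp [hcoeff_v]

section StarGram

variable {ι κ K R : Type*}

/-- The Gram matrix of a family `e` in a `*`-algebra for the sesquilinear form
`(x, y) ↦ τ (x * star y)`. The form is linear in its first argument, unlike `Matrix.gram`. -/
def starGram [CommSemiring K] [Semiring R] [Star R] [Module K R] (τ : R →ₗ[K] K) (e : ι → R) :
    Matrix ι ι K :=
  Matrix.of fun i j ↦ τ (e i * star (e j))

theorem starGram_mul_right [CommSemiring K] [Semiring R] [StarMul R] [Module K R] (τ : R →ₗ[K] K)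
    (e : ι → R) {u : R} (hu : u * star u = 1) :
    starGram τ (fun i ↦ e i * u) = starGram τ e := by
  ext i j
  calc τ (e i * u * star (e j * u)) = τ (e i * (u * star u) * star (e j)) := by
        rw [star_mul]; simp only [mul_assoc]
    _ = τ (e i * star (e j)) := by rw [hu, mul_one]

open scoped Matrix in
theorem starGram_sum_smul [CommSemiring K] [StarRing K] [Semiring R] [StarRing R] [Algebra K R]
    [StarModule K R] [Fintype κ] (τ : R →ₗ[K] K) (M : Matrix ι κ K) (e : κ → R) :
    starGram τ (fun i ↦ ∑ k, M i k • e k) = M * starGram τ e * Mᴴ := by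
  ext i j
  simp only [starGram, Matrix.of_apply, Matrix.mul_apply, Matrix.conjTranspose_apply, star_sum,
    star_smul, Finset.sum_mul, Finset.mul_sum, map_sum, smul_mul_smul_comm, map_smul, smul_eq_mul]
  exact Finset.sum_congr rfl fun l _ ↦ Finset.sum_congr rfl fun k _ ↦ mul_right_comm ..

end StarGram

/-- `D` is a projective unitary representation of `G` in the `*`-algebra `R` with factor set `ω`.
The element `D 1` is not normalised to `1`; it is the scalar multiple `ω 1 1 • 1`. -/
structure IsProjectiveUnitaryRep {G K R : Type*} [Mul G] [Monoid R] [StarMul R] [SMul K R]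
    (ω : G → G → K) (D : G → R) : Prop where
  mem_unitary (g : G) : D g ∈ unitary R
  map_mul (g h : G) : D g * D h = ω g h • D (g * h)

namespace IsProjectiveUnitaryRep

section Monoid

variable {G K R : Type*} [Mul G] [Monoid R] [StarMul R] [SMul K R] {ω : G → G → K} {D : G → R}

theorem star_mul_self (hD : IsProjectiveUnitaryRep ω D) (g : G) : star (D g) * D g = 1 :=
  Unitary.star_mul_self_of_mem (hD.mem_unitary g)

theorem mul_star_self (hD : IsProjectiveUnitaryRep ω D) (g : G) : D g * star (D g) = 1 :=
  Unitary.mul_star_self_of_mem (hD.mem_unitary g)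

end Monoid

section Field

variable {G K R : Type*} [Group G] [Field K] [Ring R] [StarMul R] [Algebra K R]
  {ω : G → G → K} {D : G → R}

theorem factor_ne_zero [Nontrivial R] (hD : IsProjectiveUnitaryRep ω D) (g h : G) :
    ω g h ≠ 0 := by
  intro hω
  have hprod : D g * D h ∈ unitary R := mul_mem (hD.mem_unitary g) (hD.mem_unitary h)
  rw [hD.map_mul, hω, zero_smul] at hprod
  simpa using Unitary.star_mul_self_of_mem hprod

theorem apply_mul [Nontrivial R] (hD : IsProjectiveUnitaryRep ω D) (g h : G) :
    D (g * h) = (ω g h)⁻¹ • (D g * D h) := by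
  rw [hD.map_mul, inv_smul_smul₀ (hD.factor_ne_zero g h)]

theorem star_mul_apply_mul [Nontrivial R] (hD : IsProjectiveUnitaryRep ω D) (g h : G) :
    star (D g) * D (g * h) = (ω g h)⁻¹ • D h := by
  rw [hD.apply_mul, mul_smul_comm, ← mul_assoc, hD.star_mul_self, one_mul]

theorem apply_mul_mul_star [Nontrivial R] (hD : IsProjectiveUnitaryRep ω D) (g h : G) :
    D (g * h) * star (D h) = (ω g h)⁻¹ • D g := by
  rw [hD.apply_mul, smul_mul_assoc, mul_assoc, hD.mul_star_self, mul_one]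

theorem apply_one (hD : IsProjectiveUnitaryRep ω D) : D 1 = ω 1 1 • (1 : R) := by
  calc D 1 = D 1 * D 1 * star (D 1) := by rw [mul_assoc, hD.mul_star_self, mul_one]
    _ = ω 1 1 • (1 : R) := by rw [hD.map_mul, mul_one, smul_mul_assoc, hD.mul_star_self]

theorem exists_identityCoeff [Nontrivial R] (hD : IsProjectiveUnitaryRep ω D)
    (hli : LinearIndependent K D) :
    ∃ τ : R →ₗ[K] K, τ 1 = 1 ∧ ∀ g ≠ 1, τ (D g) = 0 := by
  classical
  obtain ⟨τ, hτ⟩ := exists_linearMap_apply_eq_of_linearIndependent hli (Pi.single 1 (ω 1 1))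
  refine ⟨τ, ?_, fun g hg ↦ by rw [hτ, Pi.single_eq_of_ne hg]⟩
  have hτ_one : ω 1 1 * τ 1 = ω 1 1 := by
    rw [← smul_eq_mul, ← map_smul, ← hD.apply_one, hτ, Pi.single_eq_same]
  exact (mul_eq_left₀ (hD.factor_ne_zero 1 1)).mp hτ_one

variable [DecidableEq G] [Nontrivial R] {τ : R →ₗ[K] K}

theorem starGram_eq_one (hD : IsProjectiveUnitaryRep ω D) (hτ_one : τ 1 = 1)
    (hτ : ∀ g ≠ 1, τ (D g) = 0) : starGram τ D = 1 := by
  ext g h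
  obtain rfl | hgh := eq_or_ne g h
  · simp [starGram, hD.mul_star_self, hτ_one]
  · have hprod : D g * star (D h) = (ω (g * h⁻¹) h)⁻¹ • D (g * h⁻¹) := by
      simpa using hD.apply_mul_mul_star (g * h⁻¹) h
    simp [starGram, hprod, hτ (g * h⁻¹) (by rwa [ne_eq, mul_inv_eq_one]), hgh]

theorem starGram_star_inv_eq_one (hD : IsProjectiveUnitaryRep ω D) (hτ_one : τ 1 = 1)
    (hτ : ∀ g ≠ 1, τ (D g) = 0) : starGram τ (fun g ↦ star (D g⁻¹)) = 1 := by
  ext g h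
  obtain rfl | hgh := eq_or_ne g h
  · simp [starGram, hD.star_mul_self, hτ_one]
  · have hprod : star (D g⁻¹) * D h⁻¹ = (ω g⁻¹ (g * h⁻¹))⁻¹ • D (g * h⁻¹) := by
      simpa using hD.star_mul_apply_mul g⁻¹ (g * h⁻¹)
    simp [starGram, hprod, hτ (g * h⁻¹) (by rwa [ne_eq, mul_inv_eq_one]), hgh]

end Field

theorem star_inv_mul_sum_smul {G R : Type*} [Group G] [Fintype G] [Ring R] [StarMul R]
    [Algebra ℂ R] [Nontrivial R] {ω : G → G → ℂ} {D : G → R} (hD : IsProjectiveUnitaryRep ω D)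
    (α : G → ℂ) (g : G) :
    star (D g⁻¹) * ∑ h, α h • D h = ∑ k, projCirculant ω α g k • D k := by
  rw [Finset.mul_sum, ← Equiv.sum_comp (Equiv.mulLeft g⁻¹)]
  refine Finset.sum_congr rfl fun k _ ↦ ?_
  rw [Equiv.coe_mulLeft, mul_smul_comm, hD.star_mul_apply_mul, smul_smul, mul_comm, projCirculant,
    Matrix.of_apply]

end IsProjectiveUnitaryRep

open scoped Matrix in
theorem stmt_9_general {G R : Type*} [Group G] [Fintype G] [DecidableEq G] [Ring R] [StarRing R]
    [Algebra ℂ R] [StarModule ℂ R] {ω : G → G → ℂ} {D : G → R} (hD : IsProjectiveUnitaryRep ω D)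
    (hli : LinearIndependent ℂ D) {α : G → ℂ} (hα : ∑ g, α g • D g ∈ unitary R) :
    projCirculant ω α ∈ Matrix.unitaryGroup G ℂ := by
  have : Nontrivial R := nontrivial_of_ne _ _ (hli.ne_zero 1)
  obtain ⟨τ, hτ_one, hτ⟩ := hD.exists_identityCoeff hli
  rw [Matrix.mem_unitaryGroup_iff, Matrix.star_eq_conjTranspose]
  calc projCirculant ω α * (projCirculant ω α)ᴴ
      = projCirculant ω α * starGram τ D * (projCirculant ω α)ᴴ := by
        rw [hD.starGram_eq_one hτ_one hτ, mul_one]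
    _ = starGram τ (fun g ↦ star (D g⁻¹) * ∑ h, α h • D h) := by
        simp only [hD.star_inv_mul_sum_smul, starGram_sum_smul]
    _ = starGram τ (fun g ↦ star (D g⁻¹)) :=
        starGram_mul_right τ _ (Unitary.mul_star_self_of_mem hα)
    _ = 1 := hD.starGram_star_inv_eq_one hτ_one hτ

theorem stmt_9 {n : ℕ} {G : Type*} [Group G] [Fintype G] [DecidableEq G]
    (D : G → Matrix (Fin n) (Fin n) ℂ) (ω : G → G → ℂ)
    (hunit : ∀ g : G, D g ∈ Matrix.unitaryGroup (Fin n) ℂ)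
    (hone : D 1 = 1)
    (hmul : ∀ g h : G, D g * D h = ω g h • D (g * h))
    (hli : LinearIndependent ℂ D)
    (A : Matrix (Fin n) (Fin n) ℂ) (hA : A ∈ Matrix.unitaryGroup (Fin n) ℂ)
    (α : G → ℂ) (hlin : A = ∑ g : G, α g • D g) :
    projCirculant ω α ∈ Matrix.unitaryGroup G ℂ := by
  subst hlin
  exact stmt_9_general ⟨hunit, hmul⟩ hli hA
end

section
/- Let N be a positive integer, F_N the normalized discrete Fourier transform of size N, and for α ∈ ℝ define the fractional Fourier transform F_{N,α} := a₀(α)·I_N + a₁(α)·F_N + a₂(α)·F_N² + a₃(α)·F_N³, where a₀(α) = (1/2)(1 + e^{iα})·cos α, a₁(α) = (1/2)(1 − i·e^{iα})·sin α, a₂(α) = (1/2)(−1 + e^{iα})·cos α, a₃(α) = (1/2)(−1 − i·e^{iα})·sin α. Then F_{N,α} is a unitary matrix for every α ∈ ℝ. -/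
noncomputable def a0 (α : ℝ) : ℂ :=
  (1 / 2) * (1 + Complex.exp (α * Complex.I)) * Real.cos α

noncomputable def a1 (α : ℝ) : ℂ :=
  (1 / 2) * (1 - Complex.I * Complex.exp (α * Complex.I)) * Real.sin α

noncomputable def a2 (α : ℝ) : ℂ :=
  (1 / 2) * (-1 + Complex.exp (α * Complex.I)) * Real.cos α

noncomputable def a3 (α : ℝ) : ℂ :=
  (1 / 2) * (-1 - Complex.I * Complex.exp (α * Complex.I)) * Real.sin α

/-- The fractional Fourier transform
`F_{N,α} = a₀(α)·I_N + a₁(α)·F_N + a₂(α)·F_N² + a₃(α)·F_N³`. -/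
noncomputable def fracDFT (N : ℕ) (α : ℝ) : Matrix (Fin N) (Fin N) ℂ :=
  a0 α • (1 : Matrix (Fin N) (Fin N) ℂ) + a1 α • dft N + a2 α • dft N ^ 2 +
    a3 α • dft N ^ 3

/-!
`F_N` is unitary and `F_N ^ 2` is the permutation matrix of `k ↦ -k`, so `F_N` is normal with
`F_N ^ 4 = 1` and its eigenvalues lie among `1`, `-1`, `i`, `-i`. There the cubic polynomial with
coefficients `a₀(α), …, a₃(α)` takes the unimodular values `1`, `e^{2iα}`, `e^{iα}`, `e^{-iα}`, and
a polynomial in a normal matrix is unitary as soon as it is unimodular on the spectrum.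
-/

open Polynomial

section PolynomialCalculus

variable {R A : Type*} [CommRing R] [StarRing R] [MetricSpace R] [IsTopologicalRing R]
  [ContinuousStar R] [TopologicalSpace A] [Ring A] [StarRing A] [Algebra R A] {P : A → Prop}
  [ContinuousFunctionalCalculus R A P]

theorem aeval_mem_unitary_iff (p : R[X]) {a : A} (ha : P a) :
    aeval a p ∈ unitary A ↔ ∀ z ∈ spectrum R a, p.eval z ∈ unitary R := by
  rw [← cfc_polynomial p a ha, cfc_unitary_iff p.eval a ha]
  simp only [Unitary.mem_iff_star_mul_self]

end PolynomialCalculus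

theorem pow_eq_one_of_mem_spectrum {K A : Type*} [Field K] [Ring A] [Algebra K A] {a : A} {n : ℕ}
    (ha : a ^ n = 1) {z : K} (hz : z ∈ spectrum K a) : z ^ n = 1 := by
  cases subsingleton_or_nontrivial A
  · simp only [spectrum.of_subsingleton, Set.mem_empty_iff_false] at hz
  · simpa only [ha, spectrum.one_eq, Set.mem_singleton_iff] using spectrum.pow_mem_pow a n hz

section FracPoly

open Complex

/-- The polynomial with coefficients `a₀(α), …, a₃(α)`, so that `F_{N,α}` is its value at `F_N`. -/
noncomputable def fracPoly (α : ℝ) : ℂ[X] :=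
  C (a0 α) + C (a1 α) * X + C (a2 α) * X ^ 2 + C (a3 α) * X ^ 3

theorem fracDFT_eq_aeval (N : ℕ) (α : ℝ) : fracDFT N α = aeval (dft N) (fracPoly α) := by
  simp only [fracDFT, fracPoly, map_add, map_mul, map_pow, aeval_C, aeval_X,
    Algebra.algebraMap_eq_smul_one, smul_mul_assoc, one_mul]

theorem eval_fracPoly (α : ℝ) (z : ℂ) :
    (fracPoly α).eval z = a0 α + a1 α * z + a2 α * z ^ 2 + a3 α * z ^ 3 := by
  simp only [fracPoly, eval_add, eval_mul, eval_pow, eval_C, eval_X]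

theorem eval_one_fracPoly (α : ℝ) : (fracPoly α).eval 1 = 1 := by
  have exp_mul_exp_neg : exp (α * I) * exp (-α * I) = 1 := by
    rw [neg_mul, exp_neg, mul_inv_cancel₀ (exp_ne_zero _)]
  rw [exp_mul_I (-α), cos_neg, sin_neg] at exp_mul_exp_neg
  simp only [eval_fracPoly, a0, a1, a2, a3, ofReal_cos, ofReal_sin]
  linear_combination exp_mul_exp_neg

theorem eval_neg_one_fracPoly (α : ℝ) : (fracPoly α).eval (-1) = exp ((2 * α : ℝ) * I) := by
  have exp_two_mul : exp ((2 * α : ℝ) * I) = exp (α * I) * (cos α + sin α * I) := by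
    rw [← exp_mul_I, ← exp_add]
    push_cast
    ring_nf
  simp only [eval_fracPoly, a0, a1, a2, a3, ofReal_cos, ofReal_sin]
  linear_combination -exp_two_mul

theorem eval_I_fracPoly (α : ℝ) : (fracPoly α).eval I = exp (α * I) := by
  simp only [eval_fracPoly, a0, a1, a2, a3, ofReal_cos, ofReal_sin, I_sq, I_pow_three]
  rw [exp_mul_I]
  ring

theorem eval_neg_I_fracPoly (α : ℝ) : (fracPoly α).eval (-I) = exp ((-α : ℝ) * I) := by
  rw [ofReal_neg, exp_mul_I, cos_neg, sin_neg]
  simp only [eval_fracPoly, a0, a1, a2, a3, ofReal_cos, ofReal_sin, neg_sq, I_sq,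
    Odd.neg_pow (by decide : Odd 3), I_pow_three]
  ring

theorem eq_one_or_neg_one_or_I_or_neg_I_of_pow_four_eq_one {z : ℂ} (hz : z ^ 4 = 1) :
    z = 1 ∨ z = -1 ∨ z = I ∨ z = -I := by
  have hfactor : (z ^ 2 - 1 ^ 2) * (z ^ 2 - I ^ 2) = 0 := by
    rw [I_sq]
    linear_combination hz
  simpa only [mul_eq_zero, sub_eq_zero, sq_eq_sq_iff_eq_or_eq_neg, or_assoc] using hfactor

theorem norm_eval_fracPoly_of_pow_four_eq_one (α : ℝ) {z : ℂ} (hz : z ^ 4 = 1) :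
    ‖(fracPoly α).eval z‖ = 1 := by
  rcases eq_one_or_neg_one_or_I_or_neg_I_of_pow_four_eq_one hz with rfl | rfl | rfl | rfl
  · rw [eval_one_fracPoly, norm_one]
  · rw [eval_neg_one_fracPoly, norm_exp_ofReal_mul_I]
  · rw [eval_I_fracPoly, norm_exp_ofReal_mul_I]
  · rw [eval_neg_I_fracPoly, norm_exp_ofReal_mul_I]

theorem aeval_fracPoly_mem_unitary {A : Type*} [TopologicalSpace A] [Ring A] [StarRing A]
    [Algebra ℂ A] [ContinuousFunctionalCalculus ℂ A IsStarNormal] {a : A} [IsStarNormal a]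
    (ha : a ^ 4 = 1) (α : ℝ) : aeval a (fracPoly α) ∈ unitary A := by
  refine (aeval_mem_unitary_iff (fracPoly α) ‹IsStarNormal a›).2 fun z hz ↦ ?_
  have hz4 : z ^ 4 = 1 := pow_eq_one_of_mem_spectrum ha hz
  rw [Unitary.mem_iff_self_mul_star, RCLike.star_def, mul_conj',
    norm_eval_fracPoly_of_pow_four_eq_one α hz4, ofReal_one, one_pow]

open scoped Matrix.Norms.L2Operator in
theorem aeval_fracPoly_mem_unitaryGroup {n : Type*} [Fintype n] [DecidableEq n]
    {M : Matrix n n ℂ} [IsStarNormal M] (hM : M ^ 4 = 1) (α : ℝ) :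
    aeval M (fracPoly α) ∈ Matrix.unitaryGroup n ℂ :=
  aeval_fracPoly_mem_unitary hM α

end FracPoly

section DFT

open ZMod (stdAddChar)

variable {N : ℕ} [NeZero N]

theorem bijective_fin_natCast_zmod : Function.Bijective fun j : Fin N ↦ (j : ZMod N) := by
  refine (Fintype.bijective_iff_injective_and_card _).2 ⟨fun k l hkl ↦ ?_, ?_⟩
  · exact Fin.ext (CharP.natCast_injOn_Iio (ZMod N) N k.isLt l.isLt hkl)
  · rw [Fintype.card_fin, ZMod.card]

theorem dft_apply_eq_stdAddChar_s15 (k l : Fin N) :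
    dft N k l = ((√N)⁻¹ : ℝ) * stdAddChar ((k : ZMod N) * (l : ZMod N)) := by
  simp only [dft, Matrix.of_apply, one_div, ← Nat.cast_mul, ZMod.stdAddChar_apply,
    ZMod.toCircle_natCast]

theorem star_dft_apply_eq_stdAddChar (k l : Fin N) :
    star (dft N) k l = ((√N)⁻¹ : ℝ) * stdAddChar ((k : ZMod N) * -(l : ZMod N)) := by
  rw [Matrix.star_apply, dft_apply_eq_stdAddChar_s15, star_mul', RCLike.star_def,
    Complex.conj_ofReal, ← AddChar.map_neg_eq_conj, mul_neg, mul_comm (l : ZMod N)]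

theorem sum_fin_stdAddChar_mul (m : ZMod N) :
    ∑ j : Fin N, stdAddChar ((j : ZMod N) * m) = if m = 0 then (N : ℂ) else 0 := by
  rw [bijective_fin_natCast_zmod.sum_comp fun x : ZMod N ↦ stdAddChar (x * m),
    AddChar.sum_mulShift m (ZMod.isPrimitive_stdAddChar N), ZMod.card, Nat.cast_ite, Nat.cast_zero]

/-- Column `l` of `F_N ^ 2` is the case `m = l`, column `l` of `F_N * F_Nᴴ` the case `m = -l`. -/
theorem sum_dft_mul_stdAddChar (k : Fin N) (m : ZMod N) :
    ∑ j, dft N k j * (((√N)⁻¹ : ℝ) * stdAddChar ((j : ZMod N) * m)) =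
      if (k : ZMod N) + m = 0 then 1 else 0 := by
  have inv_sqrt_sq : (((√N)⁻¹ : ℝ) : ℂ) ^ 2 * N = 1 := by
    rw [← Complex.ofReal_pow, inv_pow, Real.sq_sqrt N.cast_nonneg, Complex.ofReal_inv,
      Complex.ofReal_natCast, inv_mul_cancel₀ (NeZero.ne _)]
  calc
    _ = (((√N)⁻¹ : ℝ) : ℂ) ^ 2 * ∑ j : Fin N, stdAddChar ((j : ZMod N) * ((k : ZMod N) + m)) := by
      rw [Finset.mul_sum]
      refine Finset.sum_congr rfl fun j _ ↦ ?_
      rw [dft_apply_eq_stdAddChar_s15, mul_add, AddChar.map_add_eq_mul, mul_comm (k : ZMod N)]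
      ring
    _ = if (k : ZMod N) + m = 0 then 1 else 0 := by
      rw [sum_fin_stdAddChar_mul, mul_ite, inv_sqrt_sq, mul_zero]

theorem dft_sq_apply (k l : Fin N) :
    (dft N ^ 2) k l = if (k : ZMod N) + l = 0 then 1 else 0 := by
  simp only [sq, Matrix.mul_apply, ← sum_dft_mul_stdAddChar, dft_apply_eq_stdAddChar_s15 _ l]

theorem isSelfAdjoint_dft_sq : IsSelfAdjoint (dft N ^ 2) := by
  ext k l
  rw [Matrix.star_apply, dft_sq_apply, dft_sq_apply, add_comm, apply_ite star, star_one, star_zero]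

theorem dft_mem_unitaryGroup : dft N ∈ Matrix.unitaryGroup (Fin N) ℂ := by
  rw [Matrix.mem_unitaryGroup_iff]
  ext k l
  have natCast_eq_iff : (k : ZMod N) = l ↔ k = l := bijective_fin_natCast_zmod.injective.eq_iff
  simp only [Matrix.mul_apply, star_dft_apply_eq_stdAddChar, sum_dft_mul_stdAddChar,
    Matrix.one_apply, ← sub_eq_add_neg, sub_eq_zero, natCast_eq_iff]

theorem dft_pow_four : dft N ^ 4 = 1 :=
  calc dft N ^ 4 = star (dft N ^ 2) * dft N ^ 2 := by
        rw [isSelfAdjoint_dft_sq.star_eq, ← pow_add]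
    _ = 1 := Unitary.star_mul_self_of_mem (pow_mem dft_mem_unitaryGroup 2)

end DFT

theorem stmt_15 (N : ℕ) (hN : 0 < N) (α : ℝ) :
    fracDFT N α ∈ Matrix.unitaryGroup (Fin N) ℂ := by
  have : NeZero N := ⟨hN.ne'⟩
  have : IsStarNormal (dft N) := isStarNormal_of_mem_unitary dft_mem_unitaryGroup
  rw [fracDFT_eq_aeval]
  exact aeval_fracPoly_mem_unitaryGroup dft_pow_four α
end
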